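/- Let g ∈ L¹((0,1); ℤ) be an integer-valued function, and suppose there exists a sequence t_l → 0⁺ such that ‖Δ²_{t_l} g‖_{L¹((0,1))} / t_l → 0 as l → ∞, where Δ²_t g(x) = g(x+2t) − 2g(x+t) + g(x) when x, x+t, x+2t ∈ (0,1) and 0 otherwise. Then g is constant a.e. on (0,1). -/

import Mathlib

/-!
An integer-valued `L¹` function on `(0,1)` whose second differences are `o(t)` along some
sequence `t_l → 0⁺` is constant a.e.
-/

open MeasureTheory Set Filter Topology
open scoped Classical

noncomputable section

/-- Second-order difference of `g` with step `t`, restricted to `(0,1)`. -/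
def delta2 (t : ℝ) (g : ℝ → ℝ) (x : ℝ) : ℝ :=
  if x ∈ Set.Ioo (0 : ℝ) 1 ∧ x + t ∈ Set.Ioo (0 : ℝ) 1 ∧ x + 2 * t ∈ Set.Ioo (0 : ℝ) 1 then
    g (x + 2 * t) - 2 * g (x + t) + g x
  else 0

lemma aux_affine (u : ℕ → ℤ) (k : ℕ) (h : ∀ j, j + 2 ≤ k → u (j + 2) - 2 * u (j + 1) + u j = 0) :
    ∀ j, j + 1 ≤ k → u j = u 0 + j * (u 1 - u 0) ∧ u (j + 1) = u 0 + (j + 1) * (u 1 - u 0) := by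
  intro j
  induction j with
  | zero => intro _; constructor <;> simp
  | succ j ih =>
    intro hj
    obtain ⟨h1, h2⟩ := ih (by omega)
    have h3 := h j (by omega)
    constructor
    · push_cast; exact h2
    · push_cast; linarith

/-- The bad set of nonvanishing second differences. -/
def auxD (t : ℝ) (G : ℝ → ℤ) : Set ℝ :=
  {x | 0 < x ∧ x + 2 * t < 1 ∧ G (x + 2 * t) - 2 * G (x + t) + G x ≠ 0}

/-- The set where `G` changes under a shift by `k t`. -/
def auxA (k : ℕ) (t : ℝ) (G : ℝ → ℤ) : Set ℝ :=
  {x | 0 < x ∧ x + k * t < 1 ∧ G (x + k * t) ≠ G x}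

lemma auxD_fin (t : ℝ) (ht : 0 < t) (G : ℝ → ℤ) : volume (auxD t G) ≠ ⊤ := by
  refine ne_top_of_le_ne_top (b := volume (Ioo (0:ℝ) 1)) (by simp) (measure_mono ?_)
  rintro x ⟨h1, h2, -⟩
  exact ⟨h1, by linarith⟩

lemma aux_shift (S : Set ℝ) (c : ℝ) : volume.real {x | x + c ∈ S} = volume.real S := by
  have := measure_preimage_add_right (volume : Measure ℝ) c S
  simp only [Measure.real]
  rw [← this]; rfl

lemma aux_meas (G : ℝ → ℤ) (hi : Integrable (fun x => (G x : ℝ))) (t : ℝ)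
    (ht : 0 < t) (k : ℕ) (hk : 1 ≤ k) :
    volume.real (auxA k t G) ≤ k * volume.real (auxD t G) + 4 * (∫ x, |(G x : ℝ)|) / k := by
  have hk0 : (0:ℝ) < k := by exact_mod_cast hk
  set S : Set ℝ := {x | (k:ℝ) / 2 ≤ |(G x : ℝ)|} with hS
  have hSm : (k / 2 : ℝ) * volume.real S ≤ ∫ x, |(G x : ℝ)| :=
    mul_meas_ge_le_integral_of_nonneg (Eventually.of_forall fun x => abs_nonneg _) hi.abs _
  have hSfin : volume S ≠ ⊤ := by
    have := hi.abs.measure_ge_lt_top (ε := (k:ℝ)/2) (by positivity)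
    exact this.ne
  have hsub : auxA k t G ⊆ (⋃ j ∈ Finset.range k, {x | x + j * t ∈ auxD t G}) ∪
      (S ∪ {x | x + k * t ∈ S}) := by
    rintro x ⟨h0, h1, hne⟩
    by_contra hcon
    simp only [mem_union, not_or, mem_iUnion, not_exists, Finset.mem_range, mem_ofPred_eq] at hcon
    obtain ⟨hD, hS1, hS2⟩ := hcon
    have hA := aux_affine (fun j => G (x + j * t)) k (by
      intro j hj
      by_contra hn
      refine hD j (by omega) ⟨by positivity, ?_, ?_⟩
      · have : (j:ℝ) + 2 ≤ k := by exact_mod_cast hj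
        nlinarith
      · have e1 : x + j * t + 2 * t = x + ((j + 2 : ℕ) : ℝ) * t := by push_cast; ring
        have e2 : x + j * t + t = x + ((j + 1 : ℕ) : ℝ) * t := by push_cast; ring
        rw [e1, e2]; exact hn)
    obtain ⟨m, rfl⟩ : ∃ m, k = m + 1 := ⟨k - 1, by omega⟩
    have h2 := (hA m le_rfl).2
    simp only [Nat.cast_zero, zero_mul, add_zero] at h2
    set a := G (x + ((1:ℕ):ℝ) * t) - G x with ha
    have ha0 : a ≠ 0 := by
      intro h; rw [h] at h2; simp at h2; apply hne; push_cast; exact h2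
    have ha1 : (1:ℝ) ≤ |(a:ℝ)| := by exact_mod_cast Int.one_le_abs ha0
    have h3 : ((G (x + ((m+1 : ℕ):ℝ) * t) : ℤ) : ℝ) - G x = ((m + 1 : ℕ):ℝ) * a := by
      rw [h2]; push_cast; ring
    have h4 : ((m+1:ℕ):ℝ) ≤ |((G (x + ((m+1 : ℕ):ℝ) * t) : ℤ) : ℝ) - G x| := by
      rw [h3, abs_mul, abs_of_pos hk0]; nlinarith
    have h5 := abs_sub ((G (x + ((m+1 : ℕ):ℝ) * t) : ℤ) : ℝ) (G x)
    simp only [hS, mem_ofPred_eq, not_le] at hS1 hS2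
    linarith
  have hshiftfin : ∀ (U : Set ℝ) (c : ℝ), volume U ≠ ⊤ → volume {x | x + c ∈ U} ≠ ⊤ := by
    intro U c hU
    have := measure_preimage_add_right (volume : Measure ℝ) c U
    rw [← this] at hU; exact hU
  have hUfin : volume (⋃ j ∈ Finset.range k, {x | x + j * t ∈ auxD t G}) ≠ ⊤ := by
    refine ((measure_biUnion_finset_le _ _).trans_lt ?_).ne
    rw [ENNReal.sum_lt_top]
    intro j _
    exact (hshiftfin _ _ (auxD_fin t ht G)).lt_top
  have hS2fin := hshiftfin S (k * t) hSfin
  calc volume.real (auxA k t G) ≤ _ := measureReal_mono hsub (measure_union_ne_top hUfin (measure_union_ne_top hSfin hS2fin))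
    _ ≤ _ := measureReal_union_le _ _
    _ ≤ (∑ j ∈ Finset.range k, volume.real {x | x + j * t ∈ auxD t G}) +
        (volume.real S + volume.real {x | x + k * t ∈ S}) := by
        gcongr
        · exact measureReal_biUnion_finset_le _ _
        · exact measureReal_union_le _ _
    _ = k * volume.real (auxD t G) + 2 * volume.real S := by
        simp only [aux_shift]; simp; ring
    _ ≤ _ := by
        gcongr
        rw [le_div_iff₀ hk0]; linarith

lemma aux_int (G : ℝ → ℤ) (hG : Measurable G) (t : ℝ) (ht : 0 < t) (k : ℕ) (a b : ℝ)
    (ha : 0 < a) (hab : a ≤ b) (hb : b + k * t < 1) :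
    |(∫ x in (a + k * t)..(b + k * t), Real.arctan (G x)) - ∫ x in a..b, Real.arctan (G x)|
      ≤ Real.pi * volume.real (auxA k t G) := by
  have hm : Measurable fun x => Real.arctan (G x) := by
    have : Measurable fun x => (G x : ℝ) := (measurable_from_top (f := fun n : ℤ => (n:ℝ))).comp hG
    exact Real.measurable_arctan.comp this
  have hbd : ∀ n : ℝ, ‖Real.arctan n‖ ≤ Real.pi / 2 := by
    intro n; rw [Real.norm_eq_abs, abs_le]
    exact ⟨by linarith [Real.neg_pi_div_two_lt_arctan n], (Real.arctan_lt_pi_div_two n).le⟩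
  have hA : MeasurableSet (auxA k t G) := by
    have h1 : Measurable fun x => G (x + k * t) := hG.comp (measurable_id.add_const _)
    have e : auxA k t G = Ioi 0 ∩ Iio (1 - k * t) ∩ {x | G (x + k * t) = G x}ᶜ := by
      ext x; simp only [auxA, mem_ofPred_eq, mem_inter_iff, mem_Ioi, mem_Iio, mem_compl_iff, lt_sub_iff_add_lt]; tauto
    rw [e]
    exact (measurableSet_Ioi.inter measurableSet_Iio).inter (measurableSet_eq_fun h1 hG).compl
  have hAfin : volume (auxA k t G) ≠ ⊤ := by
    refine ne_top_of_le_ne_top (b := volume (Ioo (0:ℝ) 1)) (by simp) (measure_mono ?_)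
    rintro x ⟨h1, h2, -⟩
    exact ⟨h1, by have : 0 ≤ k * t := by positivity
                  linarith⟩
  have hii : ∀ c, IntervalIntegrable (fun x => Real.arctan (G (x + c))) volume a b := by
    intro c
    rw [intervalIntegrable_iff]
    refine Measure.integrableOn_of_bounded (M := Real.pi / 2) (by simp) 
      (hm.comp (measurable_id.add_const c)).aestronglyMeasurable ?_
    exact Eventually.of_forall fun x => hbd _
  have hii0 := hii 0
  simp only [add_zero] at hii0
  rw [← intervalIntegral.integral_comp_add_right (fun x => Real.arctan (G x)),
    ← intervalIntegral.integral_sub (hii _) hii0,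
    intervalIntegral.integral_of_le hab, ← Real.norm_eq_abs]
  have hind : Integrable ((auxA k t G).indicator fun _ => Real.pi) :=
    (integrable_indicator_iff hA).2 (integrableOn_const hAfin)
  calc _ ≤ ∫ x in Ioc a b, (auxA k t G).indicator (fun _ => Real.pi) x := by
        refine norm_integral_le_of_norm_le hind.integrableOn ?_
        refine (ae_restrict_iff' measurableSet_Ioc).2 (Eventually.of_forall fun x hx => ?_)
        by_cases h : G (x + k * t) = G x
        · simp only [h, sub_self, norm_zero]
          exact indicator_nonneg (fun _ _ => Real.pi_pos.le) _
        · rw [indicator_of_mem]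
          · refine (norm_sub_le _ _).trans ?_
            linarith [hbd (G (x + k * t)), hbd (G x)]
          · exact ⟨by linarith [hx.1], by linarith [hx.2], h⟩
    _ ≤ ∫ x, (auxA k t G).indicator (fun _ => Real.pi) x :=
        setIntegral_le_integral hind
          (Eventually.of_forall fun x => indicator_nonneg (fun _ _ => Real.pi_pos.le) _)
    _ = _ := by
        rw [integral_indicator hA]; simp [mul_comm]

lemma aux_main (G : ℝ → ℤ) (hG : Measurable G) (hi : Integrable (fun x => (G x : ℝ)))
    (t : ℕ → ℝ) (htpos : ∀ l, 0 < t l) (htlim : Tendsto t atTop (𝓝 0))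
    (hD : Tendsto (fun l => volume.real (auxD (t l) G) / t l) atTop (𝓝 0)) :
    ∃ c : ℤ, ∀ᵐ x : ℝ, x ∈ Ioo (0:ℝ) 1 → G x = c := by
  set f : ℝ → ℝ := fun x => Real.arctan (G x) with hf
  have hm : Measurable f := by
    have : Measurable fun x => (G x : ℝ) := (measurable_from_top (f := fun n : ℤ => (n:ℝ))).comp hG
    exact Real.measurable_arctan.comp this
  have hbd : ∀ n : ℝ, ‖Real.arctan n‖ ≤ Real.pi / 2 := by
    intro n; rw [Real.norm_eq_abs, abs_le]
    exact ⟨by linarith [Real.neg_pi_div_two_lt_arctan n], (Real.arctan_lt_pi_div_two n).le⟩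
  have hii : ∀ a b, IntervalIntegrable f volume a b := by
    intro a b
    rw [intervalIntegrable_iff]
    exact Measure.integrableOn_of_bounded (M := Real.pi / 2) (by simp) 
      hm.aestronglyMeasurable (Eventually.of_forall fun x => hbd _)
  have hloc : LocallyIntegrable f volume := by
    intro x
    refine ⟨Ioo (x - 1) (x + 1), Ioo_mem_nhds (by linarith) (by linarith), ?_⟩
    exact Measure.integrableOn_of_bounded (M := Real.pi / 2) (by simp) 
      hm.aestronglyMeasurable (Eventually.of_forall fun x => hbd _)
  have hcont : Continuous fun x => ∫ y in (0:ℝ)..x, f y :=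
    intervalIntegral.continuous_primitive hii 0
  -- translation invariance of interval integrals
  have key : ∀ a b s : ℝ, 0 < a → a ≤ b → 0 < s → b + s < 1 →
      ∫ x in (a + s)..(b + s), f x = ∫ x in a..b, f x := by
    intro a b s ha hab hs hbs
    set k : ℕ → ℕ := fun l => ⌊s / t l⌋₊ with hk
    have hkt : ∀ l, k l * t l ≤ s := fun l => by
      have := Nat.floor_le (div_pos hs (htpos l)).le
      rwa [le_div_iff₀ (htpos l)] at this
    have hkt2 : ∀ l, s - t l ≤ k l * t l := fun l => by
      have := Nat.lt_floor_add_one (s / t l)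
      rw [div_lt_iff₀ (htpos l)] at this
      have e : (⌊s / t l⌋₊ : ℝ) = k l := rfl
      rw [e] at this
      linarith
    have hktlim : Tendsto (fun l => k l * t l) atTop (𝓝 s) := by
      refine tendsto_of_tendsto_of_tendsto_of_le_of_le (g := fun l => s - t l) (h := fun _ => s)
        ?_ tendsto_const_nhds hkt2 hkt
      simpa using tendsto_const_nhds.sub htlim
    have hst : Tendsto (fun l => s / t l) atTop atTop := by
      have : Tendsto t atTop (𝓝[>] 0) :=
        tendsto_nhdsWithin_iff.2 ⟨htlim, Eventually.of_forall htpos⟩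
      exact (this.inv_tendsto_nhdsGT_zero).const_mul_atTop hs
    have hkinf : Tendsto k atTop atTop := tendsto_nat_floor_atTop.comp hst
    have hkinfR : Tendsto (fun l => (k l : ℝ)) atTop atTop :=
      tendsto_natCast_atTop_atTop.comp hkinf
    have hlim1 : Tendsto (fun l => (∫ x in (a + k l * t l)..(b + k l * t l), f x)) atTop
        (𝓝 (∫ x in (a + s)..(b + s), f x)) := by
      have e : ∀ r, ∫ x in (a + r)..(b + r), f x =
          (∫ x in (0:ℝ)..(b + r), f x) - ∫ x in (0:ℝ)..(a + r), f x := fun r =>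
        (intervalIntegral.integral_interval_sub_left (hii _ _) (hii _ _)).symm
      simp only [e]
      have hc : Continuous fun r => (∫ x in (0:ℝ)..(b + r), f x) - ∫ x in (0:ℝ)..(a + r), f x :=
        (hcont.comp (continuous_const.add continuous_id)).sub
          (hcont.comp (continuous_const.add continuous_id))
      exact (hc.tendsto s).comp hktlim
    have hlim2 : Tendsto (fun l => (∫ x in (a + k l * t l)..(b + k l * t l), f x)
        - ∫ x in a..b, f x) atTop (𝓝 0) := by
      have hup : Tendsto (fun l => Real.pi * ((k l * t l) * (volume.real (auxD (t l) G) / t l)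
          + 4 * (∫ x, |(G x : ℝ)|) / k l)) atTop (𝓝 0) := by
        have := ((hktlim.mul hD).add (hkinfR.const_div_atTop (4 * (∫ x, |(G x : ℝ)|)))).const_mul Real.pi
        simpa using this
      refine squeeze_zero_norm' ?_ hup
      filter_upwards [hkinf.eventually_ge_atTop 1] with l hl
      have h1 := aux_int G hG (t l) (htpos l) (k l) a b ha hab (by linarith [hkt l])
      have h2 := aux_meas G hi (t l) (htpos l) (k l) hl
      rw [Real.norm_eq_abs]
      refine h1.trans (mul_le_mul_of_nonneg_left (h2.trans_eq ?_) Real.pi_pos.le)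
      have := (htpos l).ne'
      field_simp
    have h3 := hlim1.sub_const (∫ x in a..b, f x)
    exact sub_eq_zero.1 (tendsto_nhds_unique h3 hlim2)
  have hder := LocallyIntegrable.ae_hasDerivAt_integral hloc
  have hxy : ∀ x y : ℝ, 0 < x → x < y → y < 1 →
      (∀ c, HasDerivAt (fun x => ∫ (t : ℝ) in c..x, f t) (f x) x) →
      (∀ c, HasDerivAt (fun x => ∫ (t : ℝ) in c..x, f t) (f y) y) → G x = G y := by
    intro x y hx hlt hy dx dy
    set s := y - x with hs
    have d2 : HasDerivAt (fun z => ∫ u in y..(z + s), f u) (f y) x := by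
      have h := dy y
      have e : y = x + s := by rw [hs]; ring
      have h' : HasDerivAt (fun z => ∫ u in y..z, f u) (f y) (x + s) := by rw [← e]; exact h
      exact h'.comp_add_const x s
    have heq : (fun z => ∫ u in y..(z + s), f u) =ᶠ[𝓝 x] fun z => ∫ u in x..z, f u := by
      have hn : Ioo 0 (1 - s) ∈ 𝓝 x := Ioo_mem_nhds hx (by rw [hs]; linarith)
      filter_upwards [hn] with z hz
      have e : y = x + s := by rw [hs]; ring
      rw [e]
      have hs0 : 0 < s := by rw [hs]; linarith
      rcases le_total x z with h | h
      · exact key x z s hx h hs0 (by linarith [hz.2])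
      · rw [intervalIntegral.integral_symm, intervalIntegral.integral_symm z x,
          key z x s hz.1 h hs0 (by linarith)]
    have := (heq.hasDerivAt_iff.1 d2).unique (dx x)
    exact_mod_cast (Real.arctan_injective this).symm
  obtain ⟨x0, hx0m, hx0⟩ : ∃ x0 ∈ Ioo (0:ℝ) 1,
      ∀ c, HasDerivAt (fun x => ∫ (t : ℝ) in c..x, f t) (f x0) x0 := by
    by_contra hcon
    push Not at hcon
    have h0 : volume (Ioo (0:ℝ) 1) = 0 := by
      refine measure_mono_null ?_ (ae_iff.1 hder)
      intro x hx
      simpa using hcon x hx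
    simp at h0
  refine ⟨G x0, ?_⟩
  filter_upwards [hder] with x hx hxm
  rcases lt_trichotomy x x0 with h | h | h
  · exact hxy x x0 hxm.1 h hx0m.2 hx hx0
  · rw [h]
  · exact (hxy x0 x hx0m.1 h hxm.2 hx0 hx).symm

/-- **Integer-valued functions with small second differences are constant.**
If `g ∈ L¹((0,1); ℤ)` and `‖Δ²_{t_l} g‖_{L¹((0,1))} / t_l → 0` along some sequence
`t_l → 0⁺`, then `g` is constant a.e. on `(0,1)`. -/
theorem integer_valued_constant_of_small_second_differences
    (g : ℝ → ℝ) (hgInt : IntegrableOn g (Set.Ioo (0 : ℝ) 1))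
    (hgZ : ∀ᵐ x ∂volume.restrict (Set.Ioo (0 : ℝ) 1), ∃ m : ℤ, g x = (m : ℝ))
    (t : ℕ → ℝ) (htpos : ∀ l, 0 < t l) (htlim : Tendsto t atTop (𝓝 0))
    (hdiff : Tendsto (fun l => (∫ x in Set.Ioo (0 : ℝ) 1, |delta2 (t l) g x|) / t l)
      atTop (𝓝 0)) :
    ∃ c : ℝ, ∀ᵐ x ∂volume.restrict (Set.Ioo (0 : ℝ) 1), g x = c := by
  obtain ⟨g', hg'm, hg'⟩ := hgInt.aestronglyMeasurable.aemeasurable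
  set G : ℝ → ℤ := (Ioo (0:ℝ) 1).indicator fun x => round (g' x) with hGdef
  have hround : Measurable (round : ℝ → ℤ) := by
    have : (round : ℝ → ℤ) = fun x => ⌊x + 1 / 2⌋ := by funext x; exact round_eq x
    rw [this]; exact Int.measurable_floor.comp (measurable_id.add_const _)
  have hG : Measurable G := (hround.comp hg'm).indicator measurableSet_Ioo
  have hgG : ∀ᵐ x : ℝ, x ∈ Ioo (0:ℝ) 1 → g x = G x := by
    have h1 := (ae_restrict_iff' measurableSet_Ioo).1 hg'
    have h2 := (ae_restrict_iff' measurableSet_Ioo).1 hgZ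
    filter_upwards [h1, h2] with x h1 h2 hx
    obtain ⟨m, hm⟩ := h2 hx
    rw [hGdef, indicator_of_mem hx, ← h1 hx, hm, round_intCast]
  have hi : Integrable fun x => (G x : ℝ) := by
    have h1 : IntegrableOn (fun x => (G x : ℝ)) (Ioo (0:ℝ) 1) :=
      hgInt.congr ((ae_restrict_iff' measurableSet_Ioo).2 hgG)
    refine h1.integrable_of_forall_notMem_eq_zero fun x hx => ?_
    simp [hGdef, indicator_of_notMem hx]
  have hsh : ∀ c : ℝ, ∀ᵐ x : ℝ, x + c ∈ Ioo (0:ℝ) 1 → g (x + c) = G (x + c) := fun c =>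
    (measurePreserving_add_right volume c).quasiMeasurePreserving.ae hgG
  have hle : ∀ l, volume.real (auxD (t l) G) ≤ ∫ x in Ioo (0:ℝ) 1, |delta2 (t l) g x| := by
    intro l
    have htl := htpos l
    set d : ℝ → ℝ := (Ioo 0 (1 - 2 * t l)).indicator
      (fun x => (G (x + 2 * t l) : ℝ) - 2 * G (x + t l) + G x) with hd
    have hdi : Integrable d :=
      (((hi.comp_add_right (2 * t l)).sub ((hi.comp_add_right (t l)).const_mul 2)).add hi).indicator
        measurableSet_Ioo
    have e1 : ∫ x in Ioo (0:ℝ) 1, |delta2 (t l) g x| = ∫ x in Ioo (0:ℝ) 1, |d x| := by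
      refine setIntegral_congr_ae measurableSet_Ioo ?_
      filter_upwards [hgG, hsh (t l), hsh (2 * t l)] with x h0 h1 h2 hx
      by_cases hc : x ∈ Ioo 0 (1 - 2 * t l)
      · have m1 : x + t l ∈ Ioo (0:ℝ) 1 := ⟨by linarith [hc.1], by linarith [hc.2]⟩
        have m2 : x + 2 * t l ∈ Ioo (0:ℝ) 1 := ⟨by linarith [hc.1], by linarith [hc.2]⟩
        rw [hd, indicator_of_mem hc, delta2, if_pos ⟨hx, m1, m2⟩, h0 hx, h1 m1, h2 m2]
      · rw [hd, indicator_of_notMem hc, delta2, if_neg]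
        rintro ⟨-, -, m2⟩
        exact hc ⟨hx.1, by linarith [m2.2]⟩
    rw [e1]
    have h2 := mul_meas_ge_le_integral_of_nonneg (μ := volume.restrict (Ioo (0:ℝ) 1))
      (f := fun x => |d x|) (Eventually.of_forall fun x => abs_nonneg _) hdi.abs.integrableOn 1
    refine le_trans ?_ h2
    rw [one_mul, measureReal_restrict_apply']
    · refine measureReal_mono ?_ (ne_top_of_le_ne_top (b := volume (Ioo (0:ℝ) 1)) (by simp)
        (measure_mono inter_subset_right))
      rintro x ⟨p0, p1, hne⟩
      refine ⟨?_, p0, by linarith⟩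
      have hc : x ∈ Ioo 0 (1 - 2 * t l) := ⟨p0, by linarith⟩
      simp only [mem_ofPred_eq]
      rw [hd, indicator_of_mem hc]
      exact_mod_cast Int.one_le_abs hne
    · exact measurableSet_Ioo
  have hD : Tendsto (fun l => volume.real (auxD (t l) G) / t l) atTop (𝓝 0) :=
    squeeze_zero (fun l => div_nonneg measureReal_nonneg (htpos l).le)
      (fun l => div_le_div_of_nonneg_right (hle l) (htpos l).le) hdiff
  obtain ⟨c, hc⟩ := aux_main G hG hi t htpos htlim hD
  refine ⟨c, (ae_restrict_iff' measurableSet_Ioo).2 ?_⟩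
  filter_upwards [hgG, hc] with x h1 h2 hx
  rw [h1 hx, h2 hx]

end
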